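/- If there exist γ0 > 0 and α ∈ (0,1) such that K(v)^α / T(v;γ0) ≤ M for all v ∈ ℝ^d and some constant M, where T(·;γ) is the multivariate t density with γ degrees of freedom, then condition (C10) is satisfied for the base proposal density q(θ) = T(θ;γ) on ℝ^p, for any γ ≤ γ0 and any positive definite scale matrix Σ. -/

import Mathlib

open MeasureTheory Filter Matrix Set
open scoped Topology ENNReal NNReal

noncomputable section

namespace ABC

/-- Euclidean norm on `Fin k → ℝ`. -/
def euclNorm {k : ℕ} (x : Fin k → ℝ) : ℝ := Real.sqrt (∑ i, x i ^ 2)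

/-- Density at `x` of the multivariate normal distribution `N(μ, V)` on `ℝ^k`. -/
def gaussDensity {k : ℕ} (μ : Fin k → ℝ) (V : Matrix (Fin k) (Fin k) ℝ)
    (x : Fin k → ℝ) : ℝ :=
  (Real.sqrt ((2 * Real.pi) ^ k * V.det))⁻¹ *
    Real.exp (-(1 / 2) * ((x - μ) ⬝ᵥ (V⁻¹ *ᵥ (x - μ))))

/-- Density at `x` of the one-dimensional normal distribution `N(0, σ²)`. -/
def gaussDensity1 (σ2 x : ℝ) : ℝ :=
  (Real.sqrt (2 * Real.pi * σ2))⁻¹ * Real.exp (-(x ^ 2) / (2 * σ2))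

/-- Convergence in distribution (tested against bounded continuous functions) of a
sequence of random vectors to the centered Gaussian with covariance `V`. -/
def TendstoGauss {Ω : Type*} [MeasurableSpace Ω] (P : Measure Ω) {k : ℕ}
    (X : ℕ → Ω → (Fin k → ℝ)) (V : Matrix (Fin k) (Fin k) ℝ) : Prop :=
  ∀ g : (Fin k → ℝ) → ℝ, Continuous g → (∃ C, ∀ x, |g x| ≤ C) →
    Tendsto (fun n => ∫ ω, g (X n ω) ∂P) atTop
      (𝓝 (∫ x : Fin k → ℝ, g x * gaussDensity 0 V x))

/-- Convergence in distribution of a sequence of real random variables to `N(0, σ²)`. -/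
def TendstoGauss1 {Ω : Type*} [MeasurableSpace Ω] (P : Measure Ω)
    (X : ℕ → Ω → ℝ) (σ2 : ℝ) : Prop :=
  ∀ g : ℝ → ℝ, Continuous g → (∃ C, ∀ x, |g x| ≤ C) →
    Tendsto (fun n => ∫ ω, g (X n ω) ∂P) atTop (𝓝 (∫ x : ℝ, g x * gaussDensity1 σ2 x))

/-- CLT for a sequence of distributions on `ℝ^k` given by (Lebesgue) densities `fd n`:
the law of `a n • (X n - center)`, where `X n ~ fd n`, tends weakly to `N(0, V)`. -/
def DensTendstoGauss {k : ℕ} (fd : ℕ → (Fin k → ℝ) → ℝ) (a : ℕ → ℝ)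
    (center : Fin k → ℝ) (V : Matrix (Fin k) (Fin k) ℝ) : Prop :=
  ∀ g : (Fin k → ℝ) → ℝ, Continuous g → (∃ C, ∀ x, |g x| ≤ C) →
    Tendsto (fun n => ∫ x : Fin k → ℝ, g (a n • (x - center)) * fd n x) atTop
      (𝓝 (∫ x : Fin k → ℝ, g x * gaussDensity 0 V x))

/-- `Z n = O_p(r n)`: bounded in probability at rate `r`. -/
def IsBigOp {Ω : Type*} [MeasurableSpace Ω] (P : Measure Ω)
    (Z : ℕ → Ω → ℝ) (r : ℕ → ℝ) : Prop :=
  ∀ ε : ℝ, 0 < ε → ∃ M : ℝ, 0 < M ∧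
    ∀ᶠ n in atTop, P {ω | M * |r n| < |Z n ω|} ≤ ENNReal.ofReal ε

/-- `Z n = Θ_p(r n)`: bounded above and below away from zero in probability. -/
def IsThetap {Ω : Type*} [MeasurableSpace Ω] (P : Measure Ω)
    (Z : ℕ → Ω → ℝ) (r : ℕ → ℝ) : Prop :=
  IsBigOp P Z r ∧ ∀ ε : ℝ, 0 < ε → ∃ m : ℝ, 0 < m ∧
    ∀ᶠ n in atTop, P {ω | |Z n ω| < m * |r n|} ≤ ENNReal.ofReal ε

/-- Convergence in probability of `Z n` to the constant `c`. -/
def TendstoInProb {Ω : Type*} [MeasurableSpace Ω] (P : Measure Ω)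
    (Z : ℕ → Ω → ℝ) (c : ℝ) : Prop :=
  ∀ δ : ℝ, 0 < δ → Tendsto (fun n => P {ω | δ < |Z n ω - c|}) atTop (𝓝 0)

variable {p d m : ℕ}

/-- Jacobian matrix (`k × p`) of a map `s : ℝ^p → ℝ^k` at `θ`. -/
def jacobian {k : ℕ} (s : (Fin p → ℝ) → (Fin k → ℝ)) (θ : Fin p → ℝ) :
    Matrix (Fin k) (Fin p) ℝ :=
  Matrix.of fun i j => fderiv ℝ (fun x => s x i) θ (Pi.single j 1)

/-- Gradient vector of a scalar function at `θ`. -/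
def grad (h : (Fin p → ℝ) → ℝ) (θ : Fin p → ℝ) : Fin p → ℝ :=
  fun j => fderiv ℝ h θ (Pi.single j 1)

/-- Moment, shape and tail conditions (C2)(ii)–(iv) for a (kernel-like) function on `ℝ^d`:
finite mixed moments of all orders up to `pdim + 6`, a radially decreasing shape with
respect to a positive diagonal quadratic form, and exponentially decaying tails. -/
def KernelShape (pdim : ℕ) {k : ℕ} (K : (Fin k → ℝ) → ℝ) : Prop :=
  (∀ l : ℕ, l ≤ pdim + 6 → ∀ idx : Fin l → Fin k,
      Integrable (fun v : Fin k → ℝ => (∏ j, v (idx j)) * K v)) ∧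
  (∃ Λ : Fin k → ℝ, (∀ i, 0 < Λ i) ∧ ∃ κ : ℝ → ℝ,
      (∀ v, K v = κ (∑ i, Λ i * v i ^ 2)) ∧ AntitoneOn κ (Set.Ici 0)) ∧
  (∃ c₁ α₁ C : ℝ, 0 < c₁ ∧ 0 < α₁ ∧
      ∀ v : Fin k → ℝ, K v ≤ C * Real.exp (-c₁ * euclNorm v ^ α₁))

/-- The data of the ABC set-up: parameter space, true parameter, prior, summary-statistic
densities, kernel, bandwidths, CLT rates and limits, matrix square root of the asymptotic
covariance, and the Edgeworth-remainder data of condition (C4). -/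
structure Model (p d : ℕ) where
  Th : Set (Fin p → ℝ)
  θ0 : Fin p → ℝ
  δ0 : ℝ
  prior : (Fin p → ℝ) → ℝ
  f : ℕ → (Fin p → ℝ) → (Fin d → ℝ) → ℝ
  K : (Fin d → ℝ) → ℝ
  ε : ℕ → ℝ
  a : ℕ → ℝ
  sbar : (Fin p → ℝ) → (Fin d → ℝ)
  A : (Fin p → ℝ) → Matrix (Fin d) (Fin d) ℝ
  Asqrt : (Fin p → ℝ) → Matrix (Fin d) (Fin d) ℝ
  αn : ℕ → ℝ
  rmax : (Fin d → ℝ) → ℝ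

namespace Model

variable (M : Model p d)

/-- The neighbourhood `Th₀ = {θ : |θ - θ0| < δ0}` of the true parameter. -/
def P0 : Set (Fin p → ℝ) := Metric.ball M.θ0 M.δ0

/-- The information matrix `I(θ) = Ds(θ)ᵀ A(θ)⁻¹ Ds(θ)` based on the summary. -/
def Imat (θ : Fin p → ℝ) : Matrix (Fin p) (Fin p) ℝ :=
  (jacobian M.sbar θ)ᵀ * (M.A θ)⁻¹ * jacobian M.sbar θ

/-- Density of the standardized summary `W_n(S_n) = a_n A(θ)^{-1/2}(S_n - s(θ))`
under `S_n ~ f_n(·|θ)` (obtained from `f_n(·|θ)` by the change of variables). -/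
def fW (n : ℕ) (θ : Fin p → ℝ) (w : Fin d → ℝ) : ℝ :=
  ((M.a n) ^ d)⁻¹ * Real.sqrt (M.A θ).det *
    M.f n θ (M.sbar θ + (M.a n)⁻¹ • (M.Asqrt θ *ᵥ w))

/-- The ABC likelihood `f_ABC(s|θ, ε_n) = ∫ f_n(s + ε_n v | θ) K(v) dv`. -/
def fABC (n : ℕ) (θ : Fin p → ℝ) (s : Fin d → ℝ) : ℝ :=
  ∫ v : Fin d → ℝ, M.f n θ (s + M.ε n • v) * M.K v

/-- The ABC posterior mean of a vector-valued function `h`. -/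
def hABC {m : ℕ} (h : (Fin p → ℝ) → (Fin m → ℝ)) (n : ℕ) (s : Fin d → ℝ) :
    Fin m → ℝ :=
  (∫ θ : Fin p → ℝ, M.prior θ * M.fABC n θ s)⁻¹ •
    ∫ θ : Fin p → ℝ, (M.prior θ * M.fABC n θ s) • h θ

/-- The ABC posterior mean of a scalar function `h`. -/
def hABCs (h : (Fin p → ℝ) → ℝ) (n : ℕ) (s : Fin d → ℝ) : ℝ :=
  (∫ θ : Fin p → ℝ, M.prior θ * M.fABC n θ s)⁻¹ *
    ∫ θ : Fin p → ℝ, M.prior θ * M.fABC n θ s * h θ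

/-- The posterior mean of `h` given the summary `s` (posterior `∝ π(θ) f_n(s|θ)`). -/
def postMeanSummary {m : ℕ} (h : (Fin p → ℝ) → (Fin m → ℝ)) (n : ℕ)
    (s : Fin d → ℝ) : Fin m → ℝ :=
  (∫ θ : Fin p → ℝ, M.prior θ * M.f n θ s)⁻¹ •
    ∫ θ : Fin p → ℝ, (M.prior θ * M.f n θ s) • h θ

/-- Condition (C1): the true parameter is interior. -/
def Cond1 : Prop := 0 < M.δ0 ∧ M.P0 ⊆ M.Th

/-- Condition (C2) together with the running assumptions `0 ≤ K ≤ 1`, `max K = 1`. -/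
def Cond2 : Prop :=
  (∀ v, 0 ≤ M.K v) ∧ (∀ v, M.K v ≤ 1) ∧ (∃ v, M.K v = 1) ∧
  (∫ v : Fin d → ℝ, M.K v • v) = 0 ∧ KernelShape p M.K

/-- Condition (C3): CLT for the summary statistic, regularity and identifiability,
and full rank of the information matrix at `θ0`; `Asqrt` is the square root of `A`. -/
def Cond3 : Prop :=
  Tendsto M.a atTop atTop ∧
  (∀ θ ∈ M.Th, DensTendstoGauss (fun n => M.f n θ) M.a (M.sbar θ) (M.A θ)) ∧
  ContDiffOn ℝ 1 M.sbar M.P0 ∧ (∀ i j, ContDiffOn ℝ 1 (fun θ => M.A θ i j) M.P0) ∧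
  (∀ θ, (M.A θ).PosDef) ∧
  (∀ θ, M.Asqrt θ * M.Asqrt θ = M.A θ) ∧ (∀ θ, (M.Asqrt θ).IsSymm) ∧
  (∀ θ, IsUnit (M.Asqrt θ)) ∧
  (∀ θ ∈ M.Th, (M.sbar θ = M.sbar M.θ0 ↔ θ = M.θ0)) ∧
  IsUnit (M.Imat M.θ0)

/-- Condition (C4): uniform Edgeworth-type control, at rate `α_n` with
`α_n / a_n^{2/5} → ∞`, of the difference between the density of the standardized
summary and its standard normal limit, by an integrable envelope `r_max`. -/
def Cond4 : Prop :=
  Tendsto (fun n => M.αn n / (M.a n) ^ ((2 : ℝ) / 5)) atTop atTop ∧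
  (∀ w, 0 ≤ M.rmax w) ∧ (∫ w : Fin d → ℝ, M.rmax w) = 1 ∧ KernelShape p M.rmax ∧
  ∃ c₃ : ℝ, 0 < c₃ ∧ ∀ n : ℕ, ∀ θ ∈ M.P0, ∀ w : Fin d → ℝ,
    M.αn n * |M.fW n θ w - gaussDensity 0 (1 : Matrix (Fin d) (Fin d) ℝ) w| ≤
      c₃ * M.rmax w

/-- Condition (C5): exponentially decreasing tails of the standardized summary density,
uniformly outside `Th₀`, and boundedness of `A` on `Th`. -/
def Cond5 : Prop :=
  (∃ c₂ α₂ C : ℝ, 0 < c₂ ∧ 0 < α₂ ∧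
      ∀ n : ℕ, ∀ θ, θ ∉ M.P0 → ∀ w : Fin d → ℝ,
        M.fW n θ w ≤ C * Real.exp (-c₂ * euclNorm w ^ α₂)) ∧
  ∃ MA : ℝ, ∀ θ ∈ M.Th, ∀ i j, |M.A θ i j| ≤ MA

/-- Condition (C6): the prior is a continuously differentiable density near `θ0`,
positive at `θ0`. -/
def Cond6 : Prop :=
  ContDiffOn ℝ 1 M.prior M.P0 ∧ 0 < M.prior M.θ0 ∧ (∀ θ, 0 ≤ M.prior θ) ∧
  (∫ θ : Fin p → ℝ, M.prior θ) = 1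

/-- Condition (C7) for a vector-valued function of interest `h`. -/
def Cond7 {m : ℕ} (h : (Fin p → ℝ) → (Fin m → ℝ)) : Prop :=
  ContDiffOn ℝ 1 h M.P0 ∧ ∀ k : Fin m, (fun j => jacobian h M.θ0 k j) ≠ 0

/-- Condition (C8) for a vector-valued function of interest `h`. -/
def Cond8 {m : ℕ} (h : (Fin p → ℝ) → (Fin m → ℝ)) : Prop :=
  ∀ k : Fin m, Integrable (fun θ : Fin p → ℝ => |h θ k| * M.prior θ) ∧
    Integrable (fun θ : Fin p → ℝ => h θ k ^ 2 * M.prior θ)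

/-- Condition (C7) for a scalar function of interest. -/
def Cond7s (h : (Fin p → ℝ) → ℝ) : Prop :=
  ContDiffOn ℝ 1 h M.P0 ∧ grad h M.θ0 ≠ 0

/-- Condition (C8) for a scalar function of interest. -/
def Cond8s (h : (Fin p → ℝ) → ℝ) : Prop :=
  Integrable (fun θ : Fin p → ℝ => |h θ| * M.prior θ) ∧
    Integrable (fun θ : Fin p → ℝ => h θ ^ 2 * M.prior θ)

/-- Positivity of the bandwidths. -/
def Bandpos : Prop := ∀ n, 0 < M.ε n

/-- `ε_n = o(a_n^{-3/5})`. -/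
def BandwidthSmall : Prop :=
  Tendsto (fun n => M.ε n * (M.a n) ^ ((3 : ℝ) / 5)) atTop (𝓝 0)

/-- `ε_n = o(a_n^{-1/2})`. -/
def BandwidthSmall' : Prop :=
  Tendsto (fun n => M.ε n * (M.a n) ^ ((1 : ℝ) / 2)) atTop (𝓝 0)

/-- The observed summaries `s_obs` are generated from the model at the true parameter:
`sobs n` is measurable with law given by the density `f_n(·|θ0)`. -/
def DataLaw {Ω : Type*} [MeasurableSpace Ω] (P : Measure Ω)
    (sobs : ℕ → Ω → (Fin d → ℝ)) : Prop :=
  ∀ n, Measurable (sobs n) ∧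
    Measure.map (sobs n) P =
      volume.withDensity (fun s => ENNReal.ofReal (M.f n M.θ0 s))

/-- `θhat` is a maximum likelihood estimator based on the summary statistic. -/
def IsMLES {Ω : Type*} (sobs : ℕ → Ω → (Fin d → ℝ))
    (θhat : ℕ → Ω → (Fin p → ℝ)) : Prop :=
  ∀ n ω, θhat n ω ∈ M.Th ∧
    ∀ θ ∈ M.Th, M.f n θ (sobs n ω) ≤ M.f n (θhat n ω) (sobs n ω)

/-- The limit regime of `a_n ε_n` (`c_ε` finite iff `fc = true`), together with the
induced rate `a_{n,ε}`: `a_{n,ε} = a_n` if `c_ε < ∞` and `a_{n,ε} = ε_n⁻¹` otherwise. -/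
def ScaleRateB (fc : Bool) (anε : ℕ → ℝ) : Prop :=
  if fc then
    (∃ c : ℝ, Tendsto (fun n => M.a n * M.ε n) atTop (𝓝 c)) ∧ anε = M.a
  else
    Tendsto (fun n => M.a n * M.ε n) atTop atTop ∧ anε = fun n => (M.ε n)⁻¹

/-- The standardized observed summary `T_obs = a_n A(θ0)^{-1/2} (s_obs - s(θ0))`. -/
def Tobs {Ω : Type*} (sobs : ℕ → Ω → (Fin d → ℝ)) (n : ℕ) (ω : Ω) : Fin d → ℝ :=
  M.a n • ((M.Asqrt M.θ0)⁻¹ *ᵥ (sobs n ω - M.sbar M.θ0))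

end Model

end ABC

namespace ABC

variable {p d : ℕ}

/-- The (unnormalized) limiting joint density `g_n(t, v; τ)` of the rescaled parameter
`t` and summary discrepancy `v`: for `a_n ε_n → c < ∞` (`fc = true`) it is
`N((Ds(θ0)+τ)t ; a_n ε_n v + A(θ0)^{1/2} T_obs , A(θ0)) K(v)`, and for `a_n ε_n → ∞`
(`fc = false`) it is
`N((Ds(θ0)+τ)t ; v + (a_n ε_n)⁻¹ A(θ0)^{1/2} T_obs , (a_n ε_n)⁻² A(θ0)) K(v)`.
Here `c` stands for the value `a_n ε_n`. -/
def rawg (Ds : Matrix (Fin d) (Fin p) ℝ) (Ahalf A : Matrix (Fin d) (Fin d) ℝ)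
    (K : (Fin d → ℝ) → ℝ) (c : ℝ) (fc : Bool) (Tobs : Fin d → ℝ)
    (τ : Matrix (Fin d) (Fin p) ℝ) (t : Fin p → ℝ) (v : Fin d → ℝ) : ℝ :=
  if fc then gaussDensity (c • v + Ahalf *ᵥ Tobs) A ((Ds + τ) *ᵥ t) * K v
  else gaussDensity (v + c⁻¹ • (Ahalf *ᵥ Tobs)) ((c⁻¹) ^ 2 • A) ((Ds + τ) *ᵥ t) * K v

/-- The marginal `∫ g_n(t, v; τ) dv`. -/
def gmargin (Ds : Matrix (Fin d) (Fin p) ℝ) (Ahalf A : Matrix (Fin d) (Fin d) ℝ)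
    (K : (Fin d → ℝ) → ℝ) (c : ℝ) (fc : Bool) (Tobs : Fin d → ℝ)
    (τ : Matrix (Fin d) (Fin p) ℝ) (t : Fin p → ℝ) : ℝ :=
  ∫ v : Fin d → ℝ, rawg Ds Ahalf A K c fc Tobs τ t v

/-- The normalized marginal density `g_n(t; τ)`. -/
def gnorm (Ds : Matrix (Fin d) (Fin p) ℝ) (Ahalf A : Matrix (Fin d) (Fin d) ℝ)
    (K : (Fin d → ℝ) → ℝ) (c : ℝ) (fc : Bool) (Tobs : Fin d → ℝ)
    (τ : Matrix (Fin d) (Fin p) ℝ) (t : Fin p → ℝ) : ℝ :=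
  gmargin Ds Ahalf A K c fc Tobs τ t /
    ∫ t' : Fin p → ℝ, gmargin Ds Ahalf A K c fc Tobs τ t'

/-- Condition (C10): there are `α ∈ (0,1)` and a small enough `δ > 0` such that, for any
`μ_n` bounded in probability,
`sup_{t ∈ ℝ^p, τᵀτ ≤ δ I_p} g_n(t; τ)^α / q(Σ^{-1/2}(t - μ_n)) = O_p(1)`. -/
def Cond10 {Ω : Type*} [MeasurableSpace Ω] (P : MeasureTheory.Measure Ω)
    (Ds : Matrix (Fin d) (Fin p) ℝ) (Ahalf A : Matrix (Fin d) (Fin d) ℝ)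
    (K : (Fin d → ℝ) → ℝ) (c : ℕ → ℝ) (fc : Bool) (Tobs : ℕ → Ω → (Fin d → ℝ))
    (q : (Fin p → ℝ) → ℝ) (Sgsqrt : Matrix (Fin p) (Fin p) ℝ) : Prop :=
  ∃ α : ℝ, α ∈ Set.Ioo (0 : ℝ) 1 ∧ ∃ δ : ℝ, 0 < δ ∧
    ∀ μ : ℕ → Ω → (Fin p → ℝ), IsBigOp P (fun n ω => ‖μ n ω‖) (fun _ => 1) →
      ∀ εp : ℝ, 0 < εp → ∃ Mb : ℝ, 0 < Mb ∧ ∀ᶠ n in Filter.atTop,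
        P {ω | ∃ (t : Fin p → ℝ) (τ : Matrix (Fin d) (Fin p) ℝ),
            (δ • (1 : Matrix (Fin p) (Fin p) ℝ) - τᵀ * τ).PosSemidef ∧
            Mb * q (Sgsqrt⁻¹ *ᵥ (t - μ n ω)) <
              gnorm Ds Ahalf A K (c n) fc (Tobs n ω) τ t ^ α} ≤ ENNReal.ofReal εp

end ABC

namespace ABC

/-- The multivariate t density with `γ` degrees of freedom in dimension `m`. -/
def tDensity (m : ℕ) (γ : ℝ) (x : Fin m → ℝ) : ℝ :=
  Real.Gamma ((γ + m) / 2) /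
      (Real.Gamma (γ / 2) * (γ * Real.pi) ^ ((m : ℝ) / 2)) *
    (1 + euclNorm x ^ 2 / γ) ^ (-(γ + m) / 2)

end ABC

/-!
After rescaling, `∫ g_n(t, v; τ) dv` is in both regimes of the form `∫ F(w) G(Bt - sw - b) dw`,
where `B = Ds(θ0) + τ`, one of `F`, `G` is the kernel `K` and the other the `N(0, A(θ0))` density.
Both decay faster than every power of the norm, and `B` stays uniformly injective for small `τ`, so
the marginal decays in `t` faster than every power, uniformly for bounded `s` and `b`. Its integral
over `t` is bounded below because `F` and `G` are bounded away from zero near the origin; the only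
exception is `K = 0` almost everywhere, where `g_n(t; τ)` is `0 / 0 = 0`. The t density decays only
like a power of the norm, so `g_n(t; τ)^{1/2} / q(Σ^{-1/2}(t - μ))` is bounded as long as `T_obs`
and `μ` are, which is the case with probability arbitrarily close to one.
-/

namespace ABC

section Growth

theorem exists_one_add_pow_le_mul_exp {b : ℝ} (hb : 0 < b) (k : ℕ) :
    ∃ C : ℝ, ∀ u, 0 ≤ u → (1 + u) ^ k ≤ C * Real.exp (b * u) := by
  refine ⟨k.factorial / b ^ k * Real.exp b, fun u hu => ?_⟩
  have htaylor : (b * (1 + u)) ^ k / k.factorial ≤ Real.exp (b * (1 + u)) :=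
    Real.pow_div_factorial_le_exp _ (by positivity) k
  rw [mul_pow, div_le_iff₀ (by positivity), mul_one_add, Real.exp_add] at htaylor
  calc (1 + u) ^ k = b ^ k * (1 + u) ^ k / b ^ k := by field_simp
    _ ≤ Real.exp b * Real.exp (b * u) * k.factorial / b ^ k := by gcongr
    _ = k.factorial / b ^ k * Real.exp b * Real.exp (b * u) := by ring

theorem one_add_le_two_mul_one_add_rpow_rpow_inv {a r : ℝ} (ha : 0 < a) (hr : 0 ≤ r) :
    1 + r ≤ 2 * (1 + r ^ a) ^ a⁻¹ := by
  have hra : 0 ≤ r ^ a := Real.rpow_nonneg hr a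
  have hone : 1 ≤ (1 + r ^ a) ^ a⁻¹ := Real.one_le_rpow (by linarith) (by positivity)
  have hself : r ≤ (1 + r ^ a) ^ a⁻¹ :=
    calc r = (r ^ a) ^ a⁻¹ := (Real.rpow_rpow_inv hr ha.ne').symm
      _ ≤ (1 + r ^ a) ^ a⁻¹ := by gcongr; linarith
  linarith

theorem exists_exp_neg_mul_rpow_le {a b : ℝ} (ha : 0 < a) (hb : 0 < b) (N : ℕ) :
    ∃ C : ℝ, ∀ r, 0 ≤ r → Real.exp (-b * r ^ a) ≤ C / (1 + r) ^ N := by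
  obtain ⟨k, hk⟩ := exists_nat_ge (a⁻¹ * N)
  obtain ⟨C, hexp⟩ := exists_one_add_pow_le_mul_exp hb k
  refine ⟨2 ^ N * C, fun r hr => ?_⟩
  have hra : 0 ≤ r ^ a := Real.rpow_nonneg hr a
  have hpow : (1 + r) ^ N ≤ 2 ^ N * C * Real.exp (b * r ^ a) :=
    calc (1 + r) ^ N ≤ (2 * (1 + r ^ a) ^ a⁻¹) ^ N := by
          gcongr; exact one_add_le_two_mul_one_add_rpow_rpow_inv ha hr
      _ = 2 ^ N * (1 + r ^ a) ^ (a⁻¹ * N) := by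
          rw [mul_pow, Real.rpow_mul_natCast (by positivity)]
      _ ≤ 2 ^ N * (1 + r ^ a) ^ (k : ℝ) := by gcongr; linarith
      _ ≤ 2 ^ N * C * Real.exp (b * r ^ a) := by
          rw [Real.rpow_natCast, mul_assoc]; gcongr; exact hexp _ hra
  rw [neg_mul, Real.exp_neg, le_div_iff₀ (by positivity), inv_mul_le_iff₀ (Real.exp_pos _),
    mul_comm]
  exact hpow

variable {E : Type*} [SeminormedAddCommGroup E]

theorem one_add_norm_add_le (x y : E) : 1 + ‖x + y‖ ≤ (1 + ‖x‖) * (1 + ‖y‖) := by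
  nlinarith [norm_add_le x y, mul_nonneg (norm_nonneg x) (norm_nonneg y)]

theorem one_add_norm_sub_le (x y : E) : 1 + ‖x - y‖ ≤ (1 + ‖x‖) * (1 + ‖y‖) := by
  simpa only [sub_eq_add_neg, norm_neg] using one_add_norm_add_le x (-y)

theorem one_add_norm_le_sub (x y : E) : 1 + ‖x‖ ≤ (1 + ‖x - y‖) * (1 + ‖y‖) := by
  simpa only [sub_add_cancel] using one_add_norm_add_le (x - y) y

theorem div_pow_le_mul_pow_div_pow {C D x y : ℝ} (hC : 0 ≤ C) (hx : 0 < x) (hy : 0 < y)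
    (h : y ≤ D * x) (N : ℕ) : C / x ^ N ≤ C * D ^ N / y ^ N := by
  rw [div_le_div_iff₀ (by positivity) (by positivity), mul_assoc, ← mul_pow]
  gcongr

end Growth

section Decay

variable {E V : Type*} [NormedAddCommGroup E] [NormedAddCommGroup V]

/-- Nonnegative measurable functions that decay faster than every power of `1 + ‖x‖`. -/
structure IsRapidlyDecreasing [MeasurableSpace E] (f : E → ℝ) : Prop where
  measurable : Measurable f
  nonneg : ∀ x, 0 ≤ f x
  decay : ∀ N : ℕ, ∃ C : ℝ, ∀ x, f x ≤ C / (1 + ‖x‖) ^ N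

/-- `f` is bounded away from zero on the closed ball of radius `r` around the origin. -/
def BddAwayOnBall (f : E → ℝ) (r : ℝ) : Prop :=
  ∃ k : ℝ, 0 < k ∧ ∀ x, ‖x‖ ≤ r → k ≤ f x

/-- `q` is bounded below by a positive multiple of some negative power of `1 + ‖x‖`. -/
def HasPolynomialTail (q : E → ℝ) : Prop :=
  ∃ (N : ℕ) (k : ℝ), 0 < k ∧ ∀ x, k / (1 + ‖x‖) ^ N ≤ q x

theorem IsRapidlyDecreasing.of_le_exp [MeasurableSpace E] {f : E → ℝ} (hf : Measurable f)
    (hf0 : ∀ x, 0 ≤ f x) {C b a : ℝ} (hb : 0 < b) (ha : 0 < a)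
    (h : ∀ x, f x ≤ C * Real.exp (-b * ‖x‖ ^ a)) : IsRapidlyDecreasing f where
  measurable := hf
  nonneg := hf0
  decay N := by
    obtain ⟨D, hD⟩ := exists_exp_neg_mul_rpow_le ha hb N
    have hC : 0 ≤ C := nonneg_of_mul_nonneg_left ((hf0 0).trans (h 0)) (Real.exp_pos _)
    refine ⟨C * D, fun x => (h x).trans ?_⟩
    rw [mul_div_assoc]
    exact mul_le_mul_of_nonneg_left (hD _ (norm_nonneg x)) hC

theorem IsRapidlyDecreasing.exists_nonneg_decay [MeasurableSpace E] {f : E → ℝ}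
    (hf : IsRapidlyDecreasing f) (N : ℕ) :
    ∃ C : ℝ, 0 ≤ C ∧ ∀ x, f x ≤ C / (1 + ‖x‖) ^ N := by
  obtain ⟨C, hC⟩ := hf.decay N
  exact ⟨C, by simpa using (hf.nonneg 0).trans (hC 0), hC⟩

theorem bddAwayOnBall_of_continuous [ProperSpace E] {f : E → ℝ} (hf : Continuous f)
    (hpos : ∀ x, 0 < f x) (r : ℝ) : BddAwayOnBall f r := by
  obtain hempty | hne := (Metric.closedBall (0 : E) r).eq_empty_or_nonempty
  · exact ⟨1, one_pos, fun x hx =>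
      (Set.eq_empty_iff_forall_notMem.1 hempty x (mem_closedBall_zero_iff.2 hx)).elim⟩
  · obtain ⟨y, -, hmin⟩ := (isCompact_closedBall (0 : E) r).exists_isMinOn hne hf.continuousOn
    exact ⟨f y, hpos y, fun x hx => hmin (mem_closedBall_zero_iff.2 hx)⟩

theorem HasPolynomialTail.comp_sub [NormedSpace ℝ E] [NormedSpace ℝ V] {q : E → ℝ}
    (hq : HasPolynomialTail q) (L : V →L[ℝ] E) {R : ℝ} (hR : 0 ≤ R) :
    ∃ (N : ℕ) (k : ℝ), 0 < k ∧ ∀ t μ, ‖μ‖ ≤ R → k / (1 + ‖t‖) ^ N ≤ q (L (t - μ)) := by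
  obtain ⟨N, k, hk, hle⟩ := hq
  set D : ℝ := (1 + ‖L‖) * (1 + R)
  refine ⟨N, k / D ^ N, by positivity, fun t μ hμ => ?_⟩
  have hgrow : 1 + ‖L (t - μ)‖ ≤ D * (1 + ‖t‖) :=
    calc 1 + ‖L (t - μ)‖ ≤ (1 + ‖L‖) * (1 + ‖t - μ‖) := by
          nlinarith [L.le_opNorm (t - μ), norm_nonneg L, norm_nonneg (t - μ)]
      _ ≤ (1 + ‖L‖) * ((1 + ‖t‖) * (1 + R)) := by
          gcongr; exact (one_add_norm_sub_le t μ).trans (by gcongr)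
      _ = D * (1 + ‖t‖) := by ring
  calc k / D ^ N / (1 + ‖t‖) ^ N = k / (D * (1 + ‖t‖)) ^ N := by rw [div_div, mul_pow D]
    _ ≤ k / (1 + ‖L (t - μ)‖) ^ N := by gcongr
    _ ≤ q (L (t - μ)) := hle _

end Decay

section Convolution

variable {E : Type*} [NormedAddCommGroup E] [NormedSpace ℝ E] [MeasurableSpace E]

/-- The convolution of `G` with the image of `F` under `w ↦ s • w`. Both marginals
`∫ g_n(t, v; τ) dv` are of this form: with `F = K` and `G` Gaussian when `a_n ε_n → c < ∞`, and
with the two roles exchanged when `a_n ε_n → ∞`. -/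
def scaledConv (μ : Measure E) (F G : E → ℝ) (s : ℝ) (y : E) : ℝ :=
  ∫ w, F w * G (y - s • w) ∂μ

variable {F G : E → ℝ}

theorem scaledConv_nonneg {μ : Measure E} (hF : ∀ w, 0 ≤ F w) (hG : ∀ w, 0 ≤ G w) (s : ℝ)
    (y : E) : 0 ≤ scaledConv μ F G s y :=
  integral_nonneg fun w => mul_nonneg (hF w) (hG _)

-- Polynomial decay in `y` survives because `1 + ‖y‖ ≤ (1 + ‖y - s • w‖) * (1 + ‖s • w‖)`.
theorem exists_mul_comp_sub_smul_le (hF : IsRapidlyDecreasing F) (hG : IsRapidlyDecreasing G)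
    {S : ℝ} (hS : 0 ≤ S) (N k : ℕ) :
    ∃ C : ℝ, 0 ≤ C ∧ ∀ s, |s| ≤ S → ∀ y w,
      F w * G (y - s • w) ≤ C / (1 + ‖y‖) ^ N * ((1 + ‖w‖) ^ k)⁻¹ := by
  obtain ⟨CF, hCF, hFle⟩ := hF.exists_nonneg_decay (N + k)
  obtain ⟨CG, hCG, hGle⟩ := hG.exists_nonneg_decay N
  refine ⟨CF * CG * (1 + S) ^ N, by positivity, fun s hs y w => ?_⟩
  set z := y - s • w
  have hsw : 1 + ‖s • w‖ ≤ (1 + S) * (1 + ‖w‖) := by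
    have : ‖s • w‖ ≤ S * ‖w‖ := by rw [norm_smul, Real.norm_eq_abs]; gcongr
    linarith [norm_nonneg w]
  have hy : 1 + ‖y‖ ≤ (1 + S) * ((1 + ‖w‖) * (1 + ‖z‖)) :=
    calc 1 + ‖y‖ ≤ (1 + ‖z‖) * (1 + ‖s • w‖) := one_add_norm_le_sub y (s • w)
      _ ≤ (1 + ‖z‖) * ((1 + S) * (1 + ‖w‖)) := by gcongr
      _ = (1 + S) * ((1 + ‖w‖) * (1 + ‖z‖)) := by ring
  calc F w * G z ≤ CF / (1 + ‖w‖) ^ (N + k) * (CG / (1 + ‖z‖) ^ N) := by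
        gcongr
        exacts [hG.nonneg z, hFle w, hGle z]
    _ = CF * CG / ((1 + ‖w‖) * (1 + ‖z‖)) ^ N * ((1 + ‖w‖) ^ k)⁻¹ := by
        rw [pow_add, mul_pow]; field_simp
    _ ≤ CF * CG * (1 + S) ^ N / (1 + ‖y‖) ^ N * ((1 + ‖w‖) ^ k)⁻¹ := by
        refine mul_le_mul_of_nonneg_right ?_ (by positivity)
        exact div_pow_le_mul_pow_div_pow (by positivity) (by positivity) (by positivity) hy N

variable [FiniteDimensional ℝ E] {μ : Measure E} [μ.IsAddHaarMeasure]

theorem measureReal_closedBall_pos {r : ℝ} (hr : 0 < r) :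
    0 < μ.real (Metric.closedBall (0 : E) r) :=
  ENNReal.toReal_pos (Metric.measure_closedBall_pos μ _ hr).ne' measure_closedBall_lt_top.ne

variable [BorelSpace E]

theorem integrable_inv_one_add_norm_pow {k : ℕ} (hk : Module.finrank ℝ E < k) :
    Integrable (fun w : E => ((1 + ‖w‖) ^ k)⁻¹) μ := by
  refine (integrable_one_add_norm (μ := μ) (r := k) (by exact_mod_cast hk)).congr
    (Eventually.of_forall fun w => ?_)
  simp only [Real.rpow_neg (by positivity : (0 : ℝ) ≤ 1 + ‖w‖), Real.rpow_natCast]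

theorem IsRapidlyDecreasing.integrable_mul_comp_sub_smul (hF : IsRapidlyDecreasing F)
    (hG : IsRapidlyDecreasing G) (s : ℝ) (y : E) :
    Integrable (fun w => F w * G (y - s • w)) μ := by
  obtain ⟨C, -, hle⟩ := exists_mul_comp_sub_smul_le hF hG (abs_nonneg s) 0
    (Module.finrank ℝ E + 1)
  have henvelope := (integrable_inv_one_add_norm_pow (μ := μ) (Nat.lt_succ_self _)).const_mul
    (C / (1 + ‖y‖) ^ 0)
  refine henvelope.mono' ?_ (Eventually.of_forall fun w => ?_)
  · exact (hF.measurable.mul (hG.measurable.comp (by fun_prop))).aestronglyMeasurable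
  · rw [Real.norm_of_nonneg (mul_nonneg (hF.nonneg w) (hG.nonneg _))]
    exact hle s le_rfl y w

theorem measurable_scaledConv (hF : Measurable F) (hG : Measurable G) (s : ℝ) :
    Measurable (scaledConv μ F G s) := by
  refine (StronglyMeasurable.integral_prod_right (f := fun y w => F w * G (y - s • w))
    (Measurable.stronglyMeasurable ?_)).measurable
  exact (hF.comp measurable_snd).mul (hG.comp (by fun_prop))

theorem exists_scaledConv_le (hF : IsRapidlyDecreasing F) (hG : IsRapidlyDecreasing G)
    {S : ℝ} (hS : 0 ≤ S) (N : ℕ) :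
    ∃ C : ℝ, 0 ≤ C ∧ ∀ s, |s| ≤ S → ∀ y, scaledConv μ F G s y ≤ C / (1 + ‖y‖) ^ N := by
  set k := Module.finrank ℝ E + 1
  obtain ⟨C, hC, hle⟩ := exists_mul_comp_sub_smul_le hF hG hS N k
  have hint : Integrable (fun w : E => ((1 + ‖w‖) ^ k)⁻¹) μ :=
    integrable_inv_one_add_norm_pow (Nat.lt_succ_self _)
  refine ⟨C * ∫ w, ((1 + ‖w‖) ^ k)⁻¹ ∂μ,
    mul_nonneg hC (integral_nonneg fun w => by positivity), fun s hs y => ?_⟩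
  calc scaledConv μ F G s y ≤ ∫ w, C / (1 + ‖y‖) ^ N * ((1 + ‖w‖) ^ k)⁻¹ ∂μ :=
        integral_mono (hF.integrable_mul_comp_sub_smul hG s y) (hint.const_mul _) (hle s hs y)
    _ = C * (∫ w, ((1 + ‖w‖) ^ k)⁻¹ ∂μ) / (1 + ‖y‖) ^ N := by
        rw [integral_const_mul, div_mul_eq_mul_div]

theorem mul_measureReal_closedBall_le_integral {f : E → ℝ} (hf0 : ∀ x, 0 ≤ f x)
    (hf : Integrable f μ) {k r : ℝ} (h : ∀ x, ‖x‖ ≤ r → k ≤ f x) :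
    k * μ.real (Metric.closedBall 0 r) ≤ ∫ x, f x ∂μ :=
  (setIntegral_ge_of_const_le_real measurableSet_closedBall measure_closedBall_lt_top.ne
    (fun x hx => h x (mem_closedBall_zero_iff.1 hx)) hf.integrableOn).trans
    (setIntegral_le_integral hf (Eventually.of_forall hf0))

theorem exists_le_scaledConv (hF : IsRapidlyDecreasing F) (hG : IsRapidlyDecreasing G)
    {S r r' : ℝ} (hr : 0 < r) (hFr : BddAwayOnBall F r) (hGr' : BddAwayOnBall G r') :
    ∃ k : ℝ, 0 < k ∧ ∀ s, |s| ≤ S → ∀ y, ‖y‖ + S * r ≤ r' → k ≤ scaledConv μ F G s y := by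
  obtain ⟨kF, hkF, hFle⟩ := hFr
  obtain ⟨kG, hkG, hGle⟩ := hGr'
  refine ⟨kF * kG * μ.real (Metric.closedBall 0 r),
    mul_pos (mul_pos hkF hkG) (measureReal_closedBall_pos hr), fun s hs y hy => ?_⟩
  refine mul_measureReal_closedBall_le_integral
    (fun w => mul_nonneg (hF.nonneg w) (hG.nonneg _))
    (hF.integrable_mul_comp_sub_smul hG s y) fun w hw => ?_
  have hsw : ‖s • w‖ ≤ S * r := by
    rw [norm_smul, Real.norm_eq_abs]; gcongr; exact (abs_nonneg s).trans hs
  have hball : ‖y - s • w‖ ≤ r' := by linarith [norm_sub_le y (s • w)]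
  exact mul_le_mul (hFle w hw) (hGle _ hball) hkG.le (hF.nonneg w)

theorem scaledConv_inv {c : ℝ} (hc : 0 < c) (y : E) :
    scaledConv μ F G c⁻¹ y =
      c ^ Module.finrank ℝ E * ∫ v, F (c • (y - v)) * G v ∂μ := by
  have hsubst := integral_sub_left_eq_self (fun w => F (c • w) * G (y - w)) μ y
  have hscale := Measure.integral_comp_smul_of_nonneg μ (fun w => F w * G (y - c⁻¹ • w)) c
    (hR := hc.le)
  simp only [sub_sub_cancel] at hsubst
  simp only [inv_smul_smul₀ hc.ne', smul_eq_mul] at hscale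
  rw [hsubst, hscale, mul_inv_cancel_left₀ (by positivity)]
  rfl

end Convolution

section NormalisedRatio

variable {E V : Type*} [NormedAddCommGroup E] [NormedSpace ℝ E]
  [NormedAddCommGroup V] [NormedSpace ℝ V] {m M : ℝ}

/-- The norm of `B t` is comparable to that of `t`, with constants `m` and `M`. -/
structure NormComparable (m M : ℝ) (B : V →ₗ[ℝ] E) : Prop where
  lower : ∀ t, m * ‖t‖ ≤ ‖B t‖
  upper : ∀ t, ‖B t‖ ≤ M * ‖t‖

theorem NormComparable.one_add_norm_le {B : V →ₗ[ℝ] E} (hB : NormComparable m M B) (hm : 0 < m)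
    {b : E} {R : ℝ} (hb : ‖b‖ ≤ R) (t : V) :
    1 + ‖t‖ ≤ (1 + m⁻¹) * (1 + R) * (1 + ‖B t - b‖) := by
  have hBt : ‖t‖ ≤ m⁻¹ * ‖B t‖ := by
    rw [← div_eq_inv_mul, le_div_iff₀ hm, mul_comm]; exact hB.lower t
  have hm' : 0 ≤ m⁻¹ := (inv_pos.2 hm).le
  calc 1 + ‖t‖ ≤ (1 + m⁻¹) * (1 + ‖B t‖) := by nlinarith [norm_nonneg (B t)]
    _ ≤ (1 + m⁻¹) * ((1 + ‖B t - b‖) * (1 + R)) := by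
        gcongr; exact (one_add_norm_le_sub (B t) b).trans (by gcongr)
    _ = (1 + m⁻¹) * (1 + R) * (1 + ‖B t - b‖) := by ring

variable [FiniteDimensional ℝ E] [MeasurableSpace E] [BorelSpace E]
  {μ : Measure E} [μ.IsAddHaarMeasure] {F G : E → ℝ}

theorem exists_scaledConv_comp_le (hF : IsRapidlyDecreasing F) (hG : IsRapidlyDecreasing G)
    {S R : ℝ} (hS : 0 ≤ S) (hR : 0 ≤ R) (hm : 0 < m) (N : ℕ) :
    ∃ C : ℝ, 0 ≤ C ∧ ∀ s, |s| ≤ S → ∀ B : V →ₗ[ℝ] E, NormComparable m M B → ∀ b, ‖b‖ ≤ R →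
      ∀ t, scaledConv μ F G s (B t - b) ≤ C / (1 + ‖t‖) ^ N := by
  obtain ⟨C, hC, hle⟩ := exists_scaledConv_le (μ := μ) hF hG hS N
  refine ⟨C * ((1 + m⁻¹) * (1 + R)) ^ N, by positivity, fun s hs B hB b hb t => ?_⟩
  exact (hle s hs _).trans (div_pow_le_mul_pow_div_pow hC (by positivity) (by positivity)
    (hB.one_add_norm_le hm hb t) N)

variable [FiniteDimensional ℝ V] [MeasurableSpace V] [BorelSpace V]
  {ν : Measure V} [ν.IsAddHaarMeasure]

theorem integrable_scaledConv_comp (hF : IsRapidlyDecreasing F) (hG : IsRapidlyDecreasing G)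
    (s : ℝ) {B : V →ₗ[ℝ] E} (hB : NormComparable m M B) (hm : 0 < m) (b : E) :
    Integrable (fun t => scaledConv μ F G s (B t - b)) ν := by
  obtain ⟨C, -, hle⟩ := exists_scaledConv_comp_le (μ := μ) (V := V) (M := M) hF hG
    (abs_nonneg s) (norm_nonneg b) hm (Module.finrank ℝ V + 1)
  have henvelope := (integrable_inv_one_add_norm_pow (μ := ν) (Nat.lt_succ_self _)).const_mul C
  have hBmeas : Measurable B := B.continuous_of_finiteDimensional.measurable
  refine henvelope.mono' ?_ (Eventually.of_forall fun t => ?_)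
  · exact ((measurable_scaledConv hF.measurable hG.measurable s).comp
      (hBmeas.sub_const b)).aestronglyMeasurable
  · rw [Real.norm_of_nonneg (scaledConv_nonneg hF.nonneg hG.nonneg s _)]
    exact hle s le_rfl B hB b le_rfl t

theorem exists_le_integral_scaledConv_comp (hF : IsRapidlyDecreasing F)
    (hG : IsRapidlyDecreasing G) {S R r r' ρ : ℝ} (hm : 0 < m) (hM : 0 ≤ M) (hr : 0 < r)
    (hρ : 0 < ρ) (hFr : BddAwayOnBall F r) (hGr' : BddAwayOnBall G r')
    (hradii : M * ρ + S * r + R ≤ r') :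
    ∃ k : ℝ, 0 < k ∧ ∀ s, |s| ≤ S → ∀ B : V →ₗ[ℝ] E, NormComparable m M B → ∀ b, ‖b‖ ≤ R →
      k ≤ ∫ t, scaledConv μ F G s (B t - b) ∂ν := by
  obtain ⟨k, hk, hle⟩ := exists_le_scaledConv (μ := μ) (S := S) hF hG hr hFr hGr'
  refine ⟨k * ν.real (Metric.closedBall 0 ρ), mul_pos hk (measureReal_closedBall_pos hρ),
    fun s hs B hB b hb => ?_⟩
  refine mul_measureReal_closedBall_le_integral
    (fun t => scaledConv_nonneg hF.nonneg hG.nonneg s _)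
    (integrable_scaledConv_comp hF hG s hB hm b) fun t ht => hle s hs _ ?_
  have hBt : ‖B t‖ ≤ M * ρ := (hB.upper t).trans (by gcongr)
  linarith [norm_sub_le (B t) b]

theorem exists_scaledConv_div_integral_le (hF : IsRapidlyDecreasing F)
    (hG : IsRapidlyDecreasing G) {S R r r' ρ : ℝ} (hS : 0 ≤ S) (hR : 0 ≤ R) (hm : 0 < m)
    (hM : 0 ≤ M) (hr : 0 < r) (hρ : 0 < ρ) (hFr : BddAwayOnBall F r)
    (hGr' : BddAwayOnBall G r') (hradii : M * ρ + S * r + R ≤ r') (N : ℕ) :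
    ∃ C : ℝ, 0 ≤ C ∧ ∀ s, |s| ≤ S → ∀ B : V →ₗ[ℝ] E, NormComparable m M B → ∀ b, ‖b‖ ≤ R →
      ∀ t, scaledConv μ F G s (B t - b) / ∫ t', scaledConv μ F G s (B t' - b) ∂ν ≤
        C / (1 + ‖t‖) ^ N := by
  obtain ⟨C, hC, hup⟩ := exists_scaledConv_comp_le (μ := μ) (V := V) (M := M) hF hG hS hR hm N
  obtain ⟨k, hk, hlow⟩ := exists_le_integral_scaledConv_comp (μ := μ) (ν := ν) hF hG hm hM hr hρ
    hFr hGr' hradii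
  refine ⟨C / k, by positivity, fun s hs B hB b hb t => ?_⟩
  rw [div_right_comm]
  exact div_le_div₀ (by positivity) (hup s hs B hB b hb t) hk (hlow s hs B hB b hb)

end NormalisedRatio

section Matrices

variable {ι κ : Type*} [Fintype ι] [Fintype κ]

theorem dotProduct_self_le_card_mul_norm_sq (x : ι → ℝ) :
    x ⬝ᵥ x ≤ Fintype.card ι * ‖x‖ ^ 2 :=
  calc x ⬝ᵥ x ≤ ∑ _i : ι, ‖x‖ ^ 2 := Finset.sum_le_sum fun i _ => by
        rw [← sq, ← sq_abs, ← Real.norm_eq_abs]; gcongr; exact norm_le_pi_norm x i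
    _ = Fintype.card ι * ‖x‖ ^ 2 := by simp

theorem norm_le_sqrt_dotProduct_self (x : ι → ℝ) : ‖x‖ ≤ √(x ⬝ᵥ x) := by
  refine (pi_norm_le_iff_of_nonneg (Real.sqrt_nonneg _)).2 fun i => Real.abs_le_sqrt ?_
  rw [sq]
  exact Finset.single_le_sum (f := fun j => x j * x j) (fun j _ => mul_self_nonneg _)
    (Finset.mem_univ i)

theorem norm_sq_le_dotProduct_self (x : ι → ℝ) : ‖x‖ ^ 2 ≤ x ⬝ᵥ x :=
  (Real.le_sqrt (norm_nonneg x) (dotProduct_self_star_nonneg x)).1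
    (norm_le_sqrt_dotProduct_self x)

theorem euclNorm_sq {k : ℕ} (x : Fin k → ℝ) : euclNorm x ^ 2 = x ⬝ᵥ x := by
  rw [euclNorm, Real.sq_sqrt (Finset.sum_nonneg fun i _ => sq_nonneg _)]
  simp only [dotProduct, sq]

theorem norm_le_euclNorm {k : ℕ} (x : Fin k → ℝ) : ‖x‖ ≤ euclNorm x :=
  le_of_sq_le_sq ((norm_sq_le_dotProduct_self x).trans_eq (euclNorm_sq x).symm)
    (Real.sqrt_nonneg _)

theorem exists_norm_mulVec_le (B : Matrix ι κ ℝ) : ∃ C : ℝ, 0 < C ∧ ∀ t, ‖B *ᵥ t‖ ≤ C * ‖t‖ :=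
  (LinearMap.toContinuousLinearMap B.mulVecLin).bound

theorem exists_le_norm_mulVec {B : Matrix ι κ ℝ} (hB : Function.Injective B.mulVec) :
    ∃ m : ℝ, 0 < m ∧ ∀ t, m * ‖t‖ ≤ ‖B *ᵥ t‖ := by
  obtain ⟨K, hK, hanti⟩ := LinearMap.exists_antilipschitzWith B.mulVecLin
    (LinearMap.ker_eq_bot.2 hB)
  refine ⟨(K : ℝ)⁻¹, by positivity, fun t => ?_⟩
  rw [inv_mul_le_iff₀ (by positivity)]
  simpa only [dist_zero_right, map_zero, mulVecLin_apply] using hanti.le_mul_dist t 0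

theorem dotProduct_transpose_mul_mulVec (B : Matrix ι κ ℝ) (t : κ → ℝ) :
    t ⬝ᵥ ((Bᵀ * B) *ᵥ t) = (B *ᵥ t) ⬝ᵥ (B *ᵥ t) := by
  rw [← mulVec_mulVec, dotProduct_mulVec, vecMul_transpose]

open scoped MatrixOrder in
theorem exists_norm_sq_le_dotProduct_mulVec {V : Matrix ι ι ℝ} (hV : V.PosDef) :
    ∃ m : ℝ, 0 < m ∧ ∀ t, m * ‖t‖ ^ 2 ≤ t ⬝ᵥ (V *ᵥ t) := by
  classical
  obtain ⟨B, rfl⟩ := CStarAlgebra.nonneg_iff_eq_star_mul_self.mp hV.posSemidef.nonneg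
  have hquad (t : ι → ℝ) : t ⬝ᵥ ((star B * B) *ᵥ t) = (B *ᵥ t) ⬝ᵥ (B *ᵥ t) :=
    dotProduct_transpose_mul_mulVec B t
  have hBinj : Function.Injective B.mulVec :=
    (injective_iff_map_eq_zero B.mulVecLin).2 fun t ht => by
      by_contra hne
      have hpos : 0 < t ⬝ᵥ ((star B * B) *ᵥ t) := hV.dotProduct_mulVec_pos hne
      rw [hquad, show B *ᵥ t = 0 from ht, dotProduct_zero] at hpos
      exact hpos.false
  obtain ⟨m, hm, hlow⟩ := exists_le_norm_mulVec hBinj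
  refine ⟨m ^ 2, by positivity, fun t => ?_⟩
  rw [hquad, ← mul_pow]
  exact (pow_le_pow_left₀ (by positivity) (hlow t) 2).trans (norm_sq_le_dotProduct_self _)

theorem norm_mulVec_sq_le_of_posSemidef [DecidableEq κ] {δ : ℝ} (hδ : 0 ≤ δ) {τ : Matrix ι κ ℝ}
    (hτ : (δ • (1 : Matrix κ κ ℝ) - τᵀ * τ).PosSemidef) (t : κ → ℝ) :
    ‖τ *ᵥ t‖ ^ 2 ≤ δ * (Fintype.card κ * ‖t‖ ^ 2) := by
  have hquad : 0 ≤ δ * (t ⬝ᵥ t) - (τ *ᵥ t) ⬝ᵥ (τ *ᵥ t) := by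
    simpa only [star_trivial, sub_mulVec, smul_mulVec, one_mulVec, dotProduct_sub, dotProduct_smul,
      smul_eq_mul, dotProduct_transpose_mul_mulVec] using hτ.dotProduct_mulVec_nonneg t
  calc ‖τ *ᵥ t‖ ^ 2 ≤ (τ *ᵥ t) ⬝ᵥ (τ *ᵥ t) := norm_sq_le_dotProduct_self _
    _ ≤ δ * (t ⬝ᵥ t) := sub_nonneg.1 hquad
    _ ≤ δ * (Fintype.card κ * ‖t‖ ^ 2) := by
        gcongr; exact dotProduct_self_le_card_mul_norm_sq t

theorem exists_normComparable_add [DecidableEq κ] {D : Matrix ι κ ℝ}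
    (hD : Function.Injective D.mulVec) :
    ∃ δ m M : ℝ, 0 < δ ∧ 0 < m ∧ 0 < M ∧ ∀ τ : Matrix ι κ ℝ,
      (δ • (1 : Matrix κ κ ℝ) - τᵀ * τ).PosSemidef → NormComparable m M (D + τ).mulVecLin := by
  obtain ⟨m, hm, hlow⟩ := exists_le_norm_mulVec hD
  obtain ⟨M, hM, hup⟩ := exists_norm_mulVec_le D
  set δ : ℝ := m ^ 2 / (4 * (Fintype.card κ + 1)) with hδ
  refine ⟨δ, m / 2, M + m / 2, by positivity, by positivity, by positivity, fun τ hτ => ?_⟩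
  have hsmall (t : κ → ℝ) : ‖τ *ᵥ t‖ ≤ m / 2 * ‖t‖ := by
    refine le_of_sq_le_sq ?_ (by positivity)
    calc ‖τ *ᵥ t‖ ^ 2 ≤ δ * (Fintype.card κ * ‖t‖ ^ 2) :=
          norm_mulVec_sq_le_of_posSemidef (by positivity) hτ t
      _ ≤ δ * ((Fintype.card κ + 1) * ‖t‖ ^ 2) := by gcongr; linarith
      _ = (m / 2 * ‖t‖) ^ 2 := by rw [hδ]; field_simp; ring
  constructor <;> intro t <;> rw [mulVecLin_apply, add_mulVec]
  · linarith [hlow t, hsmall t, norm_le_add_norm_add (D *ᵥ t) (τ *ᵥ t)]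
  · linarith [hup t, hsmall t, norm_add_le (D *ᵥ t) (τ *ᵥ t)]

theorem mulVec_injective_of_isUnit_transpose_mul_mul [DecidableEq κ] {D : Matrix ι κ ℝ}
    {B : Matrix ι ι ℝ} (h : IsUnit (Dᵀ * B * D)) : Function.Injective D.mulVec := by
  have hcomp : Function.Injective ((Dᵀ * B).mulVec ∘ D.mulVec) := by
    simpa only [Function.comp_def, mulVec_mulVec] using mulVec_injective_of_isUnit h
  exact hcomp.of_comp

end Matrices

section Gaussian

variable {k : ℕ} {A : Matrix (Fin k) (Fin k) ℝ}

theorem gaussDensity_pos (hA : A.PosDef) (x : Fin k → ℝ) : 0 < gaussDensity 0 A x := by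
  have := hA.det_pos
  unfold gaussDensity
  positivity

theorem continuous_gaussDensity (A : Matrix (Fin k) (Fin k) ℝ) :
    Continuous (gaussDensity 0 A) := by
  have hquad : Continuous fun x : Fin k → ℝ => x ⬝ᵥ (A⁻¹ *ᵥ x) :=
    continuous_id.dotProduct (continuous_const.matrix_mulVec continuous_id)
  unfold gaussDensity
  simp only [sub_zero]
  exact continuous_const.mul (Real.continuous_exp.comp (continuous_const.mul hquad))

theorem isRapidlyDecreasing_gaussDensity (hA : A.PosDef) :
    IsRapidlyDecreasing (gaussDensity 0 A) := by
  obtain ⟨m, hm, hlow⟩ := exists_norm_sq_le_dotProduct_mulVec hA.inv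
  refine .of_le_exp (continuous_gaussDensity A).measurable (fun x => (gaussDensity_pos hA x).le)
    (C := (√((2 * Real.pi) ^ k * A.det))⁻¹) (half_pos hm) two_pos fun x => ?_
  rw [gaussDensity, sub_zero, Real.rpow_two]
  refine mul_le_mul_of_nonneg_left (Real.exp_le_exp.2 ?_) (by positivity)
  linarith [hlow x]

theorem gaussDensity_eq_sub (μ : Fin k → ℝ) (A : Matrix (Fin k) (Fin k) ℝ) (x : Fin k → ℝ) :
    gaussDensity μ A x = gaussDensity 0 A (x - μ) := by
  simp only [gaussDensity, sub_zero]

theorem gaussDensity_inv_sq_smul (hA : A.PosDef) {c : ℝ} (hc : 0 < c) (x : Fin k → ℝ) :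
    gaussDensity 0 ((c⁻¹) ^ 2 • A) x = c ^ k * gaussDensity 0 A (c • x) := by
  have hinv : ((c⁻¹) ^ 2 • A)⁻¹ = c ^ 2 • A⁻¹ := by
    refine Matrix.inv_eq_right_inv ?_
    rw [smul_mul_smul_comm, mul_nonsing_inv _ hA.det_pos.ne'.isUnit, ← mul_pow,
      inv_mul_cancel₀ hc.ne', one_pow, one_smul]
  have hdet : (2 * Real.pi) ^ k * ((c⁻¹) ^ 2 • A).det =
      ((c ^ k)⁻¹) ^ 2 * ((2 * Real.pi) ^ k * A.det) := by
    rw [det_smul, Fintype.card_fin]; ring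
  have hquad : (c • x) ⬝ᵥ (A⁻¹ *ᵥ (c • x)) = x ⬝ᵥ ((c ^ 2 • A⁻¹) *ᵥ x) := by
    simp only [mulVec_smul, smul_mulVec, dotProduct_smul, smul_dotProduct, smul_eq_mul]
    ring
  simp only [gaussDensity, sub_zero]
  rw [hinv, hdet, hquad, Real.sqrt_mul (by positivity), Real.sqrt_sq (by positivity), mul_inv,
    inv_inv, mul_assoc]

end Gaussian

section Kernel

variable {p d : ℕ} {K : (Fin d → ℝ) → ℝ}

theorem KernelShape.measurable (hK : KernelShape p K) : Measurable K := by
  obtain ⟨-, ⟨Λ, hΛ, κ, hκ, hanti⟩, -⟩ := hK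
  have hκmeas : Measurable fun x => κ (max x 0) := Antitone.measurable fun x y hxy =>
    hanti (mem_Ici.2 (le_max_right _ _)) (mem_Ici.2 (le_max_right _ _)) (max_le_max_right 0 hxy)
  have hfactor : K = (fun x => κ (max x 0)) ∘ fun v => ∑ i, Λ i * v i ^ 2 := by
    funext v
    have hnonneg : 0 ≤ ∑ i, Λ i * v i ^ 2 :=
      Finset.sum_nonneg fun i _ => mul_nonneg (hΛ i).le (sq_nonneg _)
    rw [Function.comp_apply, max_eq_left hnonneg, hκ]
  rw [hfactor]
  exact hκmeas.comp (by fun_prop)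

theorem KernelShape.isRapidlyDecreasing (hK : KernelShape p K) (hK0 : ∀ v, 0 ≤ K v) :
    IsRapidlyDecreasing K := by
  obtain ⟨-, -, b, a, C, hb, ha, htail⟩ := id hK
  have hC : 0 ≤ C := nonneg_of_mul_nonneg_left ((hK0 0).trans (htail 0)) (Real.exp_pos _)
  refine .of_le_exp hK.measurable hK0 (C := C) hb ha fun v => (htail v).trans ?_
  have hnorm : ‖v‖ ^ a ≤ euclNorm v ^ a := by gcongr; exact norm_le_euclNorm v
  exact mul_le_mul_of_nonneg_left
    (Real.exp_le_exp.2 (mul_le_mul_of_nonpos_left hnorm (neg_nonpos.2 hb.le))) hC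

theorem KernelShape.exists_bddAwayOnBall (hK : KernelShape p K) {v₀ : Fin d → ℝ} (hv₀ : v₀ ≠ 0)
    (hKv₀ : 0 < K v₀) : ∃ r, 0 < r ∧ BddAwayOnBall K r := by
  obtain ⟨-, ⟨Λ, hΛ, κ, hκ, hanti⟩, -⟩ := hK
  set Q : (Fin d → ℝ) → ℝ := fun v => ∑ i, Λ i * v i ^ 2
  have hQnonneg (v) : 0 ≤ Q v :=
    Finset.sum_nonneg fun i _ => mul_nonneg (hΛ i).le (sq_nonneg _)
  have hQv₀ : 0 < Q v₀ := by
    obtain ⟨i, hi⟩ := Function.ne_iff.1 hv₀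
    exact Finset.sum_pos' (fun i _ => mul_nonneg (hΛ i).le (sq_nonneg _))
      ⟨i, Finset.mem_univ i, mul_pos (hΛ i) (sq_pos_of_ne_zero hi)⟩
  have hQcont : Continuous Q := by fun_prop
  have hsmall : ∀ᶠ v in 𝓝 0, Q v < Q v₀ :=
    hQcont.continuousAt.eventually_lt_const (by simpa [Q] using hQv₀)
  obtain ⟨r, hr, hball⟩ := Metric.nhds_basis_closedBall.eventually_iff.1 hsmall
  refine ⟨r, hr, K v₀, hKv₀, fun v hv => ?_⟩
  rw [hκ v₀, hκ v]
  exact hanti (hQnonneg v) (hQnonneg v₀) (hball (mem_closedBall_zero_iff.2 hv)).le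

-- The second alternative does occur: `K` may be the indicator function of `{0}`.
theorem KernelShape.exists_bddAwayOnBall_or_ae_eq_zero (hK : KernelShape p K)
    (hK0 : ∀ v, 0 ≤ K v) : (∃ r, 0 < r ∧ BddAwayOnBall K r) ∨ K =ᵐ[volume] 0 := by
  by_cases hex : ∃ v, v ≠ 0 ∧ 0 < K v
  · obtain ⟨v, hv, hKv⟩ := hex
    exact .inl (hK.exists_bddAwayOnBall hv hKv)
  have hzero : ∀ v, v ≠ 0 → K v = 0 := fun v hv =>
    le_antisymm (not_lt.1 fun hpos => hex ⟨v, hv, hpos⟩) (hK0 v)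
  cases subsingleton_or_nontrivial (Fin d → ℝ) with
  | inr _ =>
    right
    filter_upwards [compl_mem_ae_iff.2 (measure_singleton (0 : Fin d → ℝ))] with v hv
    exact hzero v hv
  | inl _ =>
    obtain hpos | hK00 := (hK0 0).lt_or_eq
    · exact .inl ⟨1, one_pos, K 0, hpos, fun v _ => (congrArg K (Subsingleton.elim 0 v)).le⟩
    · refine .inr (Eventually.of_forall fun v => ?_)
      rw [Subsingleton.elim v 0, ← hK00, Pi.zero_apply]

end Kernel

section TDensity

variable {p : ℕ} {γ : ℝ}

theorem one_add_euclNorm_sq_div_le (hγ : 0 < γ) (x : Fin p → ℝ) :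
    1 + euclNorm x ^ 2 / γ ≤ (1 + p / γ) * (1 + ‖x‖) ^ 2 := by
  have hnorm : euclNorm x ^ 2 ≤ p * (1 + ‖x‖) ^ 2 := by
    calc euclNorm x ^ 2 ≤ p * ‖x‖ ^ 2 := by
          simpa only [euclNorm_sq, Fintype.card_fin] using dotProduct_self_le_card_mul_norm_sq x
      _ ≤ p * (1 + ‖x‖) ^ 2 := by gcongr; linarith
  have hone : 1 ≤ (1 + ‖x‖) ^ 2 := one_le_pow₀ (by linarith [norm_nonneg x])
  calc 1 + euclNorm x ^ 2 / γ ≤ (1 + ‖x‖) ^ 2 + p * (1 + ‖x‖) ^ 2 / γ := by gcongr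
    _ = (1 + p / γ) * (1 + ‖x‖) ^ 2 := by ring

theorem hasPolynomialTail_tDensity (hγ : 0 < γ) : HasPolynomialTail (tDensity p γ) := by
  obtain ⟨N, hN⟩ := exists_nat_ge (γ + p)
  set c₀ := Real.Gamma ((γ + p) / 2) / (Real.Gamma (γ / 2) * (γ * Real.pi) ^ ((p : ℝ) / 2)) with hc₀
  set D : ℝ := 1 + p / γ
  have hc₀pos : 0 < c₀ := by
    have := Real.Gamma_pos_of_pos (by positivity : 0 < (γ + p) / 2)
    have := Real.Gamma_pos_of_pos (by positivity : 0 < γ / 2)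
    positivity
  refine ⟨N, c₀ * D ^ (-(γ + p) / 2), by positivity, fun x => ?_⟩
  rw [tDensity, ← hc₀, mul_div_assoc]
  refine mul_le_mul_of_nonneg_left ?_ hc₀pos.le
  calc D ^ (-(γ + p) / 2) / (1 + ‖x‖) ^ N
      ≤ D ^ (-(γ + p) / 2) * (1 + ‖x‖) ^ (-(γ + p)) := by
        rw [div_eq_mul_inv, ← Real.rpow_natCast, ← Real.rpow_neg (by positivity)]
        gcongr
        linarith [norm_nonneg x]
    _ = (D * (1 + ‖x‖) ^ 2) ^ (-(γ + p) / 2) := by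
        rw [Real.mul_rpow (by positivity) (by positivity), ← Real.rpow_natCast_mul (by positivity)]
        congr 2
        push_cast
        ring
    _ ≤ (1 + euclNorm x ^ 2 / γ) ^ (-(γ + p) / 2) :=
        Real.rpow_le_rpow_of_nonpos (by positivity) (one_add_euclNorm_sq_div_le hγ x)
          (div_nonpos_of_nonpos_of_nonneg (neg_nonpos.2 (by positivity)) two_pos.le)

end TDensity

section LimitDensity

variable {p d : ℕ} {Ds : Matrix (Fin d) (Fin p) ℝ} {A Ahalf : Matrix (Fin d) (Fin d) ℝ}
  {K : (Fin d → ℝ) → ℝ}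

theorem gnorm_eq_zero_of_ae_eq_zero (hK : K =ᵐ[volume] 0) (c : ℝ) (fc : Bool) (T : Fin d → ℝ)
    (τ : Matrix (Fin d) (Fin p) ℝ) (t : Fin p → ℝ) : gnorm Ds Ahalf A K c fc T τ t = 0 := by
  have hmargin : gmargin Ds Ahalf A K c fc T τ t = 0 := integral_eq_zero_of_ae <| by
    filter_upwards [hK] with v hv
    simp only [rawg, hv, Pi.zero_apply, mul_zero, ite_self]
  rw [gnorm, hmargin, zero_div]

theorem gmargin_true_eq_scaledConv (c : ℝ) (T : Fin d → ℝ) (τ : Matrix (Fin d) (Fin p) ℝ)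
    (t : Fin p → ℝ) :
    gmargin Ds Ahalf A K c true T τ t =
      scaledConv volume K (gaussDensity 0 A) c ((Ds + τ).mulVecLin t - Ahalf *ᵥ T) := by
  refine integral_congr_ae (Eventually.of_forall fun v => ?_)
  simp only [rawg, if_true, mulVecLin_apply]
  rw [gaussDensity_eq_sub, mul_comm, sub_add_eq_sub_sub_swap]

theorem gmargin_false_eq_scaledConv (hA : A.PosDef) {c : ℝ} (hc : 0 < c) (T : Fin d → ℝ)
    (τ : Matrix (Fin d) (Fin p) ℝ) (t : Fin p → ℝ) :
    gmargin Ds Ahalf A K c false T τ t =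
      scaledConv volume (gaussDensity 0 A) K c⁻¹
        ((Ds + τ).mulVecLin t - c⁻¹ • (Ahalf *ᵥ T)) := by
  rw [scaledConv_inv hc, Module.finrank_fin_fun, ← integral_const_mul]
  refine integral_congr_ae (Eventually.of_forall fun v => ?_)
  simp only [rawg, Bool.false_eq_true, if_false, mulVecLin_apply]
  rw [gaussDensity_eq_sub, gaussDensity_inv_sq_smul hA hc, mul_assoc, sub_add_eq_sub_sub_swap]

theorem exists_gnorm_true_le (hA : A.PosDef) (hK : IsRapidlyDecreasing K) {r : ℝ} (hr : 0 < r)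
    (hKr : BddAwayOnBall K r) {S R m M : ℝ} (hS : 0 ≤ S) (hR : 0 ≤ R) (hm : 0 < m) (hM : 0 ≤ M)
    (N : ℕ) :
    ∃ C : ℝ, 0 ≤ C ∧ ∀ c, |c| ≤ S → ∀ T, ‖T‖ ≤ R →
      ∀ τ, NormComparable m M (Ds + τ).mulVecLin →
      ∀ t, gnorm Ds Ahalf A K c true T τ t ≤ C / (1 + ‖t‖) ^ N := by
  obtain ⟨a, ha, hAhalf⟩ := exists_norm_mulVec_le Ahalf
  obtain ⟨C, hC, hle⟩ := exists_scaledConv_div_integral_le (μ := (volume : Measure (Fin d → ℝ)))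
    (ν := (volume : Measure (Fin p → ℝ))) hK
    (isRapidlyDecreasing_gaussDensity hA) hS (by positivity : 0 ≤ a * R) hm hM hr one_pos hKr
    (bddAwayOnBall_of_continuous (continuous_gaussDensity A) (gaussDensity_pos hA) _) le_rfl N
  refine ⟨C, hC, fun c hc T hT τ hτ t => ?_⟩
  simp only [gnorm, gmargin_true_eq_scaledConv]
  exact hle c hc _ hτ _ ((hAhalf T).trans (by gcongr)) t

-- `s = (a_n ε_n)⁻¹` and the shift `b = (a_n ε_n)⁻¹ A(θ0)^{1/2} T_obs` both vanish in the limit, so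
-- the ball on which `K` is bounded below, although small, eventually suffices.
theorem exists_eventually_gnorm_false_le (hA : A.PosDef) (hK : IsRapidlyDecreasing K) {r : ℝ}
    (hr : 0 < r) (hKr : BddAwayOnBall K r) {R m M : ℝ} (hm : 0 < m) (hM : 0 < M)
    (N : ℕ) :
    ∃ C : ℝ, 0 ≤ C ∧ ∀ᶠ c in atTop, ∀ T, ‖T‖ ≤ R →
      ∀ τ, NormComparable m M (Ds + τ).mulVecLin →
      ∀ t, gnorm Ds Ahalf A K c false T τ t ≤ C / (1 + ‖t‖) ^ N := by
  obtain ⟨a, ha, hAhalf⟩ := exists_norm_mulVec_le Ahalf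
  have hradii : M * (r / 3 / M) + r / 3 * 1 + r / 3 ≤ r := by
    rw [mul_div_cancel₀ _ hM.ne']; linarith
  obtain ⟨C, hC, hle⟩ := exists_scaledConv_div_integral_le (μ := (volume : Measure (Fin d → ℝ)))
    (ν := (volume : Measure (Fin p → ℝ))) (isRapidlyDecreasing_gaussDensity hA) hK
    (by positivity) (by positivity) hm hM.le one_pos (by positivity)
    (bddAwayOnBall_of_continuous (continuous_gaussDensity A) (gaussDensity_pos hA) 1) hKr hradii N
  have hscale : ∀ᶠ c : ℝ in atTop, c⁻¹ ≤ r / 3 :=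
    tendsto_inv_atTop_zero.eventually_le_const (by positivity)
  have hshift : ∀ᶠ c : ℝ in atTop, c⁻¹ * (a * R) ≤ r / 3 :=
    (tendsto_inv_atTop_zero.mul_const (a * R)).eventually_le_const (by rw [zero_mul]; positivity)
  refine ⟨C, hC, ?_⟩
  filter_upwards [eventually_gt_atTop 0, hscale, hshift] with c hc hcS hcR T hT τ hτ t
  have hc' : 0 ≤ c⁻¹ := (inv_pos.2 hc).le
  have hb : ‖c⁻¹ • (Ahalf *ᵥ T)‖ ≤ r / 3 := by
    rw [norm_smul, Real.norm_of_nonneg hc']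
    refine le_trans ?_ hcR
    gcongr
    exact (hAhalf T).trans (by gcongr)
  simp only [gnorm, gmargin_false_eq_scaledConv hA hc]
  exact hle c⁻¹ (by rwa [abs_of_nonneg hc']) _ hτ _ hb t

theorem exists_eventually_gnorm_le (hA : A.PosDef) (hK0 : ∀ v, 0 ≤ K v) {l : ℕ}
    (hK : KernelShape l K) {c : ℕ → ℝ} {fc : Bool}
    (hc : if fc then ∃ L : ℝ, 0 ≤ L ∧ Tendsto c atTop (𝓝 L) else Tendsto c atTop atTop)
    {R m M : ℝ} (hR : 0 ≤ R) (hm : 0 < m) (hM : 0 < M) (N : ℕ) :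
    ∃ C : ℝ, 0 ≤ C ∧ ∀ᶠ n in atTop, ∀ T, ‖T‖ ≤ R →
      ∀ τ, NormComparable m M (Ds + τ).mulVecLin →
      ∀ t, gnorm Ds Ahalf A K (c n) fc T τ t ≤ C / (1 + ‖t‖) ^ N := by
  obtain ⟨r, hr, hKr⟩ | hKzero := hK.exists_bddAwayOnBall_or_ae_eq_zero hK0
  · have hKrapid := hK.isRapidlyDecreasing hK0
    cases fc with
    | true =>
      obtain ⟨L, -, hcL⟩ := hc
      obtain ⟨C, hC, hle⟩ := exists_gnorm_true_le (Ds := Ds) (Ahalf := Ahalf) hA hKrapid hr hKr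
        (by positivity : 0 ≤ |L| + 1) hR hm hM.le N
      refine ⟨C, hC, ?_⟩
      filter_upwards [hcL.abs.eventually_le_const (lt_add_one |L|)] with n hn
      exact hle (c n) hn
    | false =>
      obtain ⟨C, hC, hle⟩ := exists_eventually_gnorm_false_le (Ds := Ds) (Ahalf := Ahalf) hA
        hKrapid hr hKr hm hM N
      exact ⟨C, hC, Tendsto.eventually hc hle⟩
  · refine ⟨0, le_rfl, Eventually.of_forall fun n T _ τ _ t => ?_⟩
    rw [gnorm_eq_zero_of_ae_eq_zero hKzero, zero_div]

theorem rpow_half_le_mul_of_le_div_pow {g q x C k : ℝ} {N : ℕ} (hk : 0 < k) (hC : 0 ≤ C)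
    (hx : 0 < x) (hg : g ≤ C / x ^ (2 * N)) (hq : k / x ^ N ≤ q) :
    g ^ (1 / 2 : ℝ) ≤ √C / k * q :=
  calc g ^ (1 / 2 : ℝ) = √g := (Real.sqrt_eq_rpow g).symm
    _ ≤ √(C / (x ^ N) ^ 2) := by rw [← pow_mul, mul_comm N]; exact Real.sqrt_le_sqrt hg
    _ = √C / k * (k / x ^ N) := by
      rw [Real.sqrt_div hC, Real.sqrt_sq (by positivity)]; field_simp
    _ ≤ √C / k * q := by gcongr

theorem exists_eventually_gnorm_rpow_half_le (hA : A.PosDef) (hK0 : ∀ v, 0 ≤ K v) {l : ℕ}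
    (hK : KernelShape l K) {c : ℕ → ℝ} {fc : Bool}
    (hc : if fc then ∃ L : ℝ, 0 ≤ L ∧ Tendsto c atTop (𝓝 L) else Tendsto c atTop atTop)
    {q : (Fin p → ℝ) → ℝ} (hq : HasPolynomialTail q) (Q : Matrix (Fin p) (Fin p) ℝ)
    {R m M : ℝ} (hR : 0 ≤ R) (hm : 0 < m) (hM : 0 < M) :
    ∃ C : ℝ, 0 < C ∧ ∀ᶠ n in atTop, ∀ T, ‖T‖ ≤ R → ∀ μ, ‖μ‖ ≤ R →
      ∀ τ, NormComparable m M (Ds + τ).mulVecLin →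
      ∀ t, gnorm Ds Ahalf A K (c n) fc T τ t ^ (1 / 2 : ℝ) ≤ C * q (Q *ᵥ (t - μ)) := by
  obtain ⟨N, k, hk, hqle⟩ := hq.comp_sub Q.mulVecLin.toContinuousLinearMap hR
  obtain ⟨C, hC, hg⟩ := exists_eventually_gnorm_le (Ds := Ds) (Ahalf := Ahalf) hA hK0 hK hc
    hR hm hM (2 * N)
  refine ⟨√(C + 1) / k, by positivity, ?_⟩
  filter_upwards [hg] with n hn T hT μ hμ τ hτ t
  refine rpow_half_le_mul_of_le_div_pow hk (by positivity) (by positivity : 0 < 1 + ‖t‖)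
    ((hn T hT τ hτ t).trans ?_) (hqle t μ hμ)
  gcongr
  exact (lt_add_one C).le

end LimitDensity

section BoundedInProbability

variable {Ω : Type*} [MeasurableSpace Ω] {P : Measure Ω}

theorem IsBigOp.add {X Y : ℕ → Ω → ℝ} {r : ℕ → ℝ} (hX : IsBigOp P X r) (hY : IsBigOp P Y r) :
    IsBigOp P (fun n ω => X n ω + Y n ω) r := by
  intro ε hε
  obtain ⟨M, hM, hXM⟩ := hX (ε / 2) (half_pos hε)
  obtain ⟨L, hL, hYL⟩ := hY (ε / 2) (half_pos hε)
  refine ⟨M + L, add_pos hM hL, ?_⟩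
  filter_upwards [hXM, hYL] with n hXn hYn
  have hsub : {ω | (M + L) * |r n| < |X n ω + Y n ω|} ⊆
      {ω | M * |r n| < |X n ω|} ∪ {ω | L * |r n| < |Y n ω|} := fun ω hω => by
    by_contra hout
    simp only [mem_union, mem_ofPred_eq, not_or, not_lt] at hω hout
    linarith [abs_add_le (X n ω) (Y n ω)]
  calc P {ω | (M + L) * |r n| < |X n ω + Y n ω|}
      ≤ P {ω | M * |r n| < |X n ω|} + P {ω | L * |r n| < |Y n ω|} :=
        (measure_mono hsub).trans (measure_union_le _ _)
    _ ≤ ENNReal.ofReal (ε / 2) + ENNReal.ofReal (ε / 2) := add_le_add hXn hYn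
    _ = ENNReal.ofReal ε := by rw [← ENNReal.ofReal_add (by positivity) (by positivity), add_halves]

end BoundedInProbability

end ABC

open ABC in
theorem t_proposal_satisfies_C10_general
    {p d l : ℕ} {Ω : Type*} [MeasurableSpace Ω] (P : Measure Ω)
    (Ds : Matrix (Fin d) (Fin p) ℝ) (A Ahalf : Matrix (Fin d) (Fin d) ℝ)
    (hA : A.PosDef) (_hAhalf : Ahalf * Ahalf = A) (hDs : IsUnit (Dsᵀ * A⁻¹ * Ds))
    (K : (Fin d → ℝ) → ℝ) (hK0 : ∀ v, 0 ≤ K v) (_hKpos : ∃ v, 0 < K v) (hK : KernelShape l K)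
    (c : ℕ → ℝ) (fc : Bool)
    (hc : if fc then ∃ L : ℝ, 0 ≤ L ∧ Tendsto c atTop (𝓝 L) else Tendsto c atTop atTop)
    (Tobs : ℕ → Ω → (Fin d → ℝ)) (hTobs : IsBigOp P (fun n ω => ‖Tobs n ω‖) (fun _ => 1))
    (q : (Fin p → ℝ) → ℝ) (hq : HasPolynomialTail q)
    (Sgsqrt : Matrix (Fin p) (Fin p) ℝ) (_hSgsqrt : IsUnit Sgsqrt) :
    Cond10 P Ds Ahalf A K c fc Tobs q Sgsqrt := by
  obtain ⟨δ, m, M, hδ, hm, hM, hcomparable⟩ :=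
    exists_normComparable_add (mulVec_injective_of_isUnit_transpose_mul_mul hDs)
  refine ⟨1 / 2, by norm_num, δ, hδ, fun μ hμ ε hε => ?_⟩
  obtain ⟨R, hR, hprob⟩ := (hTobs.add hμ) ε hε
  obtain ⟨C, hC, hg⟩ := exists_eventually_gnorm_rpow_half_le (Ds := Ds) (Ahalf := Ahalf) hA hK0
    hK hc hq Sgsqrt⁻¹ hR.le hm hM
  refine ⟨C, hC, ?_⟩
  filter_upwards [hprob, hg] with n hn hgn
  refine (measure_mono ?_).trans hn
  rintro ω ⟨t, τ, hτ, hlt⟩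
  rw [mem_ofPred_eq, abs_one, mul_one]
  refine (not_le.1 fun hbdd => ?_).trans_le (le_abs_self _)
  refine hlt.not_ge (hgn (Tobs n ω) ?_ (μ n ω) ?_ τ (hcomparable τ hτ) t) <;>
    linarith [norm_nonneg (Tobs n ω), norm_nonneg (μ n ω)]

open ABC in
/-- Proposition 4.4: if `K(v)^α / T(v; γ0) ≤ M` for some `γ0 > 0`, `α ∈ (0,1)` and a
constant `M`, then condition (C10) is satisfied by the multivariate t base density
`q = T(·; γ)` for any degrees of freedom `γ ≤ γ0` and any scale matrix `Σ`. -/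
theorem t_proposal_satisfies_C10
    {p d : ℕ} {Ω : Type*} [MeasurableSpace Ω]
    (P : MeasureTheory.Measure Ω) [MeasureTheory.IsProbabilityMeasure P]
    (Ds : Matrix (Fin d) (Fin p) ℝ) (A Ahalf : Matrix (Fin d) (Fin d) ℝ)
    (hA : A.PosDef) (hAhalf : Ahalf * Ahalf = A)
    (hDs : IsUnit (Dsᵀ * A⁻¹ * Ds))
    (K : (Fin d → ℝ) → ℝ) (hK0 : ∀ v, 0 ≤ K v) (hK1 : ∀ v, K v ≤ 1)
    (hKmax : ∃ v, K v = 1) (hKmean : (∫ v : Fin d → ℝ, K v • v) = 0)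
    (hKshape : KernelShape p K)
    (c : ℕ → ℝ) (hcpos : ∀ n, 0 < c n) (fc : Bool)
    (hc : if fc then ∃ L : ℝ, 0 ≤ L ∧ Filter.Tendsto c Filter.atTop (nhds L)
      else Filter.Tendsto c Filter.atTop Filter.atTop)
    (Tobs : ℕ → Ω → (Fin d → ℝ))
    (hTobs : IsBigOp P (fun n ω => ‖Tobs n ω‖) (fun _ => 1))
    (γ0 α Mb : ℝ) (hγ0 : 0 < γ0) (hα : α ∈ Set.Ioo (0 : ℝ) 1)
    (hbound : ∀ v : Fin d → ℝ, K v ^ α / tDensity d γ0 v ≤ Mb) :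
    ∀ γ : ℝ, 0 < γ → γ ≤ γ0 →
      ∀ Sgsqrt : Matrix (Fin p) (Fin p) ℝ, IsUnit Sgsqrt →
        Cond10 P Ds Ahalf A K c fc Tobs (tDensity p γ) Sgsqrt := by
  intro γ hγ _ Sgsqrt hSgsqrt
  exact t_proposal_satisfies_C10_general P Ds A Ahalf hA hAhalf hDs K hK0
    (hKmax.imp fun _ hv => one_pos.trans_eq hv.symm) hKshape c fc hc Tobs hTobs (tDensity p γ)
    (hasPolynomialTail_tDensity hγ) Sgsqrt hSgsqrt
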